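/- For all real n×n matrices P and Q, the quantity 2(‖P‖² ‖Q‖² − trace(Pᵀ Q)²) − ‖PQ − QP‖² is nonnegative, where ‖·‖ denotes the Frobenius norm. -/

import Mathlib

open Matrix

/-!
Write `S = YᴴY + YYᴴ`. Expanding and cycling traces gives
`‖XY - YX‖² + ‖XᴴY + YXᴴ‖² = tr (S(XXᴴ + XᴴX))`, and Cauchy–Schwarz bounds the second term on the
left from below, since `tr (Yᴴ(XᴴY + YXᴴ))` is the conjugate of `tr (SX)`. What remains is a
bound on the variance of `X` in the unnormalized state `S`. There one may take `S` diagonal, with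
eigenvalues `pᵢ` of sum `s`. An off-diagonal entry of `X` costs nothing because `pᵢ + pⱼ ≤ s`. The
diagonal entries `xᵢ` contribute the scalar variance `∑ᵢⱼ pᵢpⱼ|xᵢ - xⱼ|²`, which is bounded by
`|xᵢ - xⱼ|² ≤ 2|xᵢ|² + 2|xⱼ|²` and `4pᵢ(s - pᵢ) ≤ s²`. This gives `‖XY - YX‖² ≤ 2‖X‖²‖Y‖²`, and
replacing `Y` by its component orthogonal to `X`, which does not change the commutator, inserts the
term `|tr (XᴴY)|²`.
-/

section InnerProductSpace

open RCLike

variable {ι E : Type*} [Fintype ι] [SeminormedAddCommGroup E]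

lemma sum_sum_mul_mul_norm_sub_sq_eq_variance [InnerProductSpace ℝ E] (p : ι → ℝ) (x : ι → E) :
    ∑ i, ∑ j, p i * p j * ‖x i - x j‖ ^ 2 =
      2 * ((∑ i, p i) * ∑ i, p i * ‖x i‖ ^ 2 - ‖∑ i, p i • x i‖ ^ 2) := by
  have hcross : ∑ i, ∑ j, p i * p j * inner ℝ (x i) (x j) = ‖∑ i, p i • x i‖ ^ 2 := by
    rw [← real_inner_self_eq_norm_sq, sum_inner]
    simp only [inner_sum, real_inner_smul_left, real_inner_smul_right, mul_assoc, mul_left_comm]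
  calc ∑ i, ∑ j, p i * p j * ‖x i - x j‖ ^ 2
      = ∑ i, ∑ j, (p j * (p i * ‖x i‖ ^ 2) + p i * (p j * ‖x j‖ ^ 2)
          - 2 * (p i * p j * inner ℝ (x i) (x j))) := by
        simp only [norm_sub_sq_real]
        congr! 2
        ring
    _ = 2 * ((∑ i, p i) * ∑ i, p i * ‖x i‖ ^ 2 - ‖∑ i, p i • x i‖ ^ 2) := by
        simp only [Finset.sum_sub_distrib, Finset.sum_add_distrib, ← Finset.mul_sum,
          ← Finset.sum_mul, hcross]
        ring

lemma two_mul_weighted_variance_le [InnerProductSpace ℝ E] {p : ι → ℝ} (hp : ∀ i, 0 ≤ p i)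
    (x : ι → E) :
    2 * ((∑ i, p i) * ∑ i, p i * ‖x i‖ ^ 2 - ‖∑ i, p i • x i‖ ^ 2) ≤
      (∑ i, p i) ^ 2 * ∑ i, ‖x i‖ ^ 2 := by
  classical
  set s := ∑ i, p i with hs
  have hpair (i j : ι) : p i * p j * ‖x i - x j‖ ^ 2 ≤
      2 * (p j * (p i * ‖x i‖ ^ 2)) + 2 * (p i * (p j * ‖x j‖ ^ 2))
        - if i = j then 4 * p i ^ 2 * ‖x i‖ ^ 2 else 0 := by
    split_ifs with h
    · subst h
      simp only [sub_self, norm_zero]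
      exact le_of_eq (by ring)
    · have hle : ‖x i - x j‖ ^ 2 ≤ 2 * (‖x i‖ ^ 2 + ‖x j‖ ^ 2) := by
        nlinarith [parallelogram_law_with_norm ℝ (x i) (x j)]
      linarith [mul_le_mul_of_nonneg_left hle (mul_nonneg (hp i) (hp j))]
  calc 2 * (s * ∑ i, p i * ‖x i‖ ^ 2 - ‖∑ i, p i • x i‖ ^ 2)
      = ∑ i, ∑ j, p i * p j * ‖x i - x j‖ ^ 2 := (sum_sum_mul_mul_norm_sub_sq_eq_variance p x).symm
    _ ≤ ∑ i, ∑ j, (2 * (p j * (p i * ‖x i‖ ^ 2)) + 2 * (p i * (p j * ‖x j‖ ^ 2))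
        - if i = j then 4 * p i ^ 2 * ‖x i‖ ^ 2 else 0) :=
        Finset.sum_le_sum fun i _ => Finset.sum_le_sum fun j _ => hpair i j
    _ = ∑ i, 4 * (p i * (s - p i)) * ‖x i‖ ^ 2 := by
        simp only [Finset.sum_sub_distrib, Finset.sum_add_distrib, Finset.sum_ite_eq,
          Finset.mem_univ, if_true, ← Finset.mul_sum, ← Finset.sum_mul, ← hs]
        simp only [Finset.mul_sum, ← Finset.sum_add_distrib, ← Finset.sum_sub_distrib]
        congr! 1
        ring
    _ ≤ ∑ i, s ^ 2 * ‖x i‖ ^ 2 := by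
        gcongr with i
        nlinarith [sq_nonneg (s - 2 * p i)]
    _ = s ^ 2 * ∑ i, ‖x i‖ ^ 2 := (Finset.mul_sum _ _ _).symm

variable {𝕜 : Type*} [RCLike 𝕜]

lemma norm_sq_mul_norm_sub_smul_sq [InnerProductSpace 𝕜 E] (x y : E) :
    ‖x‖ ^ 2 * ‖y - (inner 𝕜 x y / (‖x‖ : 𝕜) ^ 2) • x‖ ^ 2 =
      ‖x‖ ^ 2 * ‖y‖ ^ 2 - ‖inner 𝕜 x y‖ ^ 2 := by
  rcases eq_or_ne ‖x‖ 0 with hx | hx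
  · have hzero : inner 𝕜 x y = 0 := by simpa [hx] using norm_inner_le_norm (𝕜 := 𝕜) x y
    simp [hx, hzero]
  have hinner : re (inner 𝕜 y ((inner 𝕜 x y / (‖x‖ : 𝕜) ^ 2) • x)) =
      ‖inner 𝕜 x y‖ ^ 2 / ‖x‖ ^ 2 := by
    rw [inner_smul_right, div_mul_eq_mul_div, ← inner_conj_symm y x, RCLike.mul_conj,
      ← ofReal_pow, ← ofReal_pow, ← ofReal_div, ofReal_re]
  rw [norm_sub_sq (𝕜 := 𝕜), hinner, norm_smul, norm_div, norm_pow, norm_ofReal, abs_norm]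
  field_simp
  ring

end InnerProductSpace

section TraceIdentities

variable {ι R : Type*} [Fintype ι]

lemma trace_conjStarAlgAut [CommSemiring R] [StarRing R] [DecidableEq ι]
    (U : unitary (Matrix ι ι R)) (A : Matrix ι ι R) :
    trace (Unitary.conjStarAlgAut R _ U A) = trace A := by
  rw [Unitary.conjStarAlgAut_apply, trace_mul_cycle, Unitary.coe_star_mul_self, Matrix.one_mul]

lemma trace_commutator_sq_add_trace_anticommutator_sq [CommRing R] [StarRing R]
    (X Y : Matrix ι ι R) :
    trace ((X * Y - Y * X)ᴴ * (X * Y - Y * X)) + trace ((Xᴴ * Y + Y * Xᴴ)ᴴ * (Xᴴ * Y + Y * Xᴴ)) =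
      trace ((Yᴴ * Y + Y * Yᴴ) * (X * Xᴴ + Xᴴ * X)) := by
  have hcycle (A B C D : Matrix ι ι R) :
      trace (A * (B * (C * D))) = trace (B * (C * (D * A))) := by
    rw [trace_mul_comm]
    simp only [Matrix.mul_assoc]
  simp only [conjTranspose_sub, conjTranspose_add, conjTranspose_mul, conjTranspose_conjTranspose,
    Matrix.mul_add, Matrix.add_mul, Matrix.mul_sub, Matrix.sub_mul, trace_add, trace_sub,
    Matrix.mul_assoc]
  linear_combination hcycle Xᴴ Yᴴ Y X - hcycle Y Yᴴ Xᴴ X + hcycle X Yᴴ Y Xᴴ - hcycle Y Yᴴ X Xᴴ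
    - hcycle Xᴴ Yᴴ X Y + hcycle X Yᴴ Xᴴ Y

end TraceIdentities

section Frobenius

open RCLike
open scoped Matrix.Norms.Frobenius ComplexOrder

variable {𝕜 ι m n : Type*} [RCLike 𝕜] [Fintype ι] [Fintype m] [Fintype n]

lemma frobenius_norm_sq_eq_sum (A : Matrix m n 𝕜) : ‖A‖ ^ 2 = ∑ i, ∑ j, ‖A i j‖ ^ 2 := by
  rw [frobenius_norm_def, ← Real.sqrt_eq_rpow, Real.sq_sqrt (by positivity)]
  simp only [Real.rpow_two]

lemma trace_conjTranspose_mul_self_eq_norm_sq (A : Matrix m n 𝕜) :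
    trace (Aᴴ * A) = (‖A‖ : 𝕜) ^ 2 := by
  rw [← ofReal_pow, frobenius_norm_sq_eq_sum, Finset.sum_comm]
  simp [trace, mul_apply, RCLike.conj_mul]

/-- The Frobenius (Hilbert–Schmidt) inner product `⟪A, B⟫ = tr (AᴴB)`, whose norm is the
Frobenius norm of Mathlib. It makes Cauchy–Schwarz and orthogonal projection available for
matrices. -/
@[reducible]
noncomputable def frobeniusInnerProductSpace : InnerProductSpace 𝕜 (Matrix m n 𝕜) where
  inner A B := trace (Aᴴ * B)
  norm_sq_eq_re_inner A := by
    rw [trace_conjTranspose_mul_self_eq_norm_sq, ← ofReal_pow, ofReal_re]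
  conj_inner_symm A B := by
    rw [starRingEnd_apply, ← trace_conjTranspose, conjTranspose_mul, conjTranspose_conjTranspose]
  add_left A B C := by rw [conjTranspose_add, Matrix.add_mul, trace_add]
  smul_left A B c := by
    rw [conjTranspose_smul, Matrix.smul_mul, trace_smul, smul_eq_mul, starRingEnd_apply]

attribute [local instance] frobeniusInnerProductSpace

lemma norm_trace_conjTranspose_mul_sq_le (A B : Matrix m n 𝕜) :
    ‖trace (Aᴴ * B)‖ ^ 2 ≤ ‖A‖ ^ 2 * ‖B‖ ^ 2 := by
  rw [← mul_pow]
  exact pow_le_pow_left₀ (norm_nonneg _) (norm_inner_le_norm (𝕜 := 𝕜) A B) 2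

lemma re_trace_diagonal_mul_self_mul_conjTranspose_add [DecidableEq ι]
    (p : ι → ℝ) (X : Matrix ι ι 𝕜) :
    re (trace (diagonal (fun i => (p i : 𝕜)) * (X * Xᴴ + Xᴴ * X))) =
      ∑ i, ∑ j, (p i + p j) * ‖X i j‖ ^ 2 := by
  have hrow (i : ι) : re ((X * Xᴴ) i i) = ∑ j, ‖X i j‖ ^ 2 := by
    simp only [mul_apply, conjTranspose_apply, star_def, RCLike.mul_conj, ← ofReal_pow, map_sum,
      ofReal_re]
  have hcol (i : ι) : re ((Xᴴ * X) i i) = ∑ j, ‖X j i‖ ^ 2 := by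
    simp only [mul_apply, conjTranspose_apply, star_def, RCLike.conj_mul, ← ofReal_pow, map_sum,
      ofReal_re]
  have hswap : ∑ i, ∑ j, p j * ‖X i j‖ ^ 2 = ∑ i, ∑ j, p i * ‖X j i‖ ^ 2 := Finset.sum_comm
  simp only [trace, diag_apply, diagonal_mul, map_sum, re_ofReal_mul, Matrix.add_apply, map_add,
    hrow, hcol]
  simp only [mul_add, add_mul, Finset.sum_add_distrib, Finset.mul_sum, hswap]

lemma re_trace_variance_diagonal_le [DecidableEq ι] {p : ι → ℝ} (hp : ∀ i, 0 ≤ p i)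
    (X : Matrix ι ι 𝕜) :
    (∑ i, p i) * re (trace (diagonal (fun i => (p i : 𝕜)) * (X * Xᴴ + Xᴴ * X)))
        - 2 * ‖trace (diagonal (fun i => (p i : 𝕜)) * X)‖ ^ 2 ≤
      (∑ i, p i) ^ 2 * ‖X‖ ^ 2 := by
  set s := ∑ i, p i
  have hs : 0 ≤ s := Finset.sum_nonneg fun i _ => hp i
  have hentry (i j : ι) : s * ((p i + p j) * ‖X i j‖ ^ 2) ≤ s ^ 2 * ‖X i j‖ ^ 2 +
      if i = j then 2 * (s * (p i * ‖X i i‖ ^ 2)) - s ^ 2 * ‖X i i‖ ^ 2 else 0 := by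
    split_ifs with h
    · subst h
      exact le_of_eq (by ring)
    · have hpair : p i + p j ≤ s := by
        rw [← Finset.sum_pair h]
        exact Finset.sum_le_univ_sum_of_nonneg hp
      nlinarith [mul_le_mul_of_nonneg_left hpair (mul_nonneg hs (sq_nonneg ‖X i j‖))]
  have hsum : s * ∑ i, ∑ j, (p i + p j) * ‖X i j‖ ^ 2 ≤
      s ^ 2 * ‖X‖ ^ 2 + (2 * (s * ∑ i, p i * ‖X i i‖ ^ 2) - s ^ 2 * ∑ i, ‖X i i‖ ^ 2) := by
    have hentries := Finset.sum_le_sum fun i (_ : i ∈ Finset.univ) =>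
      Finset.sum_le_sum fun j (_ : j ∈ Finset.univ) => hentry i j
    simpa only [frobenius_norm_sq_eq_sum, Finset.sum_add_distrib, Finset.sum_ite_eq,
      Finset.mem_univ, if_true, Finset.sum_sub_distrib, ← Finset.mul_sum] using hentries
  have hdiag := two_mul_weighted_variance_le hp fun i => X i i
  have htrace : trace (diagonal (fun i => (p i : 𝕜)) * X) = ∑ i, p i • X i i := by
    simp [trace, real_smul_eq_coe_mul]
  rw [re_trace_diagonal_mul_self_mul_conjTranspose_add, htrace]
  linarith

lemma frobenius_norm_conjStarAlgAut [DecidableEq ι] (U : unitary (Matrix ι ι 𝕜))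
    (A : Matrix ι ι 𝕜) : ‖Unitary.conjStarAlgAut 𝕜 _ U A‖ = ‖A‖ := by
  refine (sq_eq_sq₀ (norm_nonneg _) (norm_nonneg _)).1 (ofReal_injective (K := 𝕜) ?_)
  simp only [ofReal_pow, ← trace_conjTranspose_mul_self_eq_norm_sq,
    ← star_eq_conjTranspose, ← map_star, ← map_mul, trace_conjStarAlgAut]

lemma re_trace_variance_posSemidef_le {S : Matrix ι ι 𝕜} (hS : S.PosSemidef) (X : Matrix ι ι 𝕜) :
    re (trace S) * re (trace (S * (X * Xᴴ + Xᴴ * X))) - 2 * ‖trace (S * X)‖ ^ 2 ≤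
      re (trace S) ^ 2 * ‖X‖ ^ 2 := by
  classical
  set φ := Unitary.conjStarAlgAut 𝕜 _ hS.isHermitian.eigenvectorUnitary with hφ
  set p := hS.isHermitian.eigenvalues
  have hSφ : S = φ (diagonal fun i => (p i : 𝕜)) := hS.isHermitian.spectral_theorem
  obtain ⟨Y, rfl⟩ : ∃ Y, φ Y = X := φ.surjective X
  have htrace : re (trace S) = ∑ i, p i := by
    simp [hS.isHermitian.trace_eq_sum_eigenvalues, p]
  have hvar := re_trace_variance_diagonal_le hS.eigenvalues_nonneg Y
  rw [htrace, hSφ]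
  simpa only [← star_eq_conjTranspose, ← map_star, ← map_mul, ← map_add, hφ,
    trace_conjStarAlgAut, frobenius_norm_conjStarAlgAut] using hvar

lemma norm_commutator_sq_le (X Y : Matrix ι ι 𝕜) :
    ‖X * Y - Y * X‖ ^ 2 ≤ 2 * (‖X‖ ^ 2 * ‖Y‖ ^ 2) := by
  rcases eq_or_ne Y 0 with rfl | hY
  · simp
  set S := Yᴴ * Y + Y * Yᴴ
  set Z := Xᴴ * Y + Y * Xᴴ
  have hS : S.PosSemidef :=
    (posSemidef_conjTranspose_mul_self Y).add (posSemidef_self_mul_conjTranspose Y)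
  have htraceS : re (trace S) = 2 * ‖Y‖ ^ 2 := by
    rw [trace_add, trace_mul_comm Y, ← two_mul, trace_conjTranspose_mul_self_eq_norm_sq]
    norm_cast
  have hsum : re (trace (S * (X * Xᴴ + Xᴴ * X))) = ‖X * Y - Y * X‖ ^ 2 + ‖Z‖ ^ 2 := by
    rw [← trace_commutator_sq_add_trace_anticommutator_sq]
    simp only [trace_conjTranspose_mul_self_eq_norm_sq]
    norm_cast
  have htraceZ : trace (Yᴴ * Z) = star (trace (S * X)) := by
    rw [← trace_conjTranspose, conjTranspose_mul, hS.isHermitian.eq, trace_mul_comm Xᴴ]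
    simp only [S, Z, Matrix.mul_add, Matrix.add_mul, trace_add, ← Matrix.mul_assoc]
    rw [trace_mul_cycle Yᴴ Xᴴ Y, add_comm]
  have hcauchy : ‖trace (S * X)‖ ^ 2 ≤ ‖Y‖ ^ 2 * ‖Z‖ ^ 2 := by
    simpa only [htraceZ, norm_star] using norm_trace_conjTranspose_mul_sq_le Y Z
  have hvar := re_trace_variance_posSemidef_le hS X
  rw [htraceS, hsum] at hvar
  have hpos : 0 < ‖Y‖ ^ 2 := by positivity
  refine le_of_mul_le_mul_left ?_ hpos
  linarith

theorem bw_nonneg_general (P Q : Matrix ι ι 𝕜) :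
    0 ≤ 2 * (‖P‖ ^ 2 * ‖Q‖ ^ 2 - ‖trace (Pᴴ * Q)‖ ^ 2) - ‖P * Q - Q * P‖ ^ 2 := by
  set c : 𝕜 := inner 𝕜 P Q / (‖P‖ : 𝕜) ^ 2
  have hcomm : P * (Q - c • P) - (Q - c • P) * P = P * Q - Q * P := by
    simp [Matrix.mul_sub, Matrix.sub_mul]
  have hproj : ‖P‖ ^ 2 * ‖Q - c • P‖ ^ 2 = ‖P‖ ^ 2 * ‖Q‖ ^ 2 - ‖trace (Pᴴ * Q)‖ ^ 2 :=
    norm_sq_mul_norm_sub_smul_sq P Q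
  have hbound := norm_commutator_sq_le P (Q - c • P)
  rw [hcomm, hproj] at hbound
  exact sub_nonneg.2 hbound

end Frobenius

/-- The Böttcher–Wenzel inequality: for real n×n matrices `P, Q`,
`2(‖P‖²‖Q‖² − trace(PᵀQ)²) − ‖PQ − QP‖² ≥ 0`, Frobenius norm. -/
theorem bw_nonneg (n : ℕ) (P Q : Matrix (Fin n) (Fin n) ℝ) :
    0 ≤ 2 * (Matrix.trace (Pᵀ * P) * Matrix.trace (Qᵀ * Q) -
        (Matrix.trace (Pᵀ * Q)) ^ 2) -
      Matrix.trace ((P * Q - Q * P)ᵀ * (P * Q - Q * P)) := by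
  simpa only [← conjTranspose_eq_transpose_of_trivial,
    trace_conjTranspose_mul_self_eq_norm_sq, RCLike.ofReal_real_eq_id, id_eq, Real.norm_eq_abs,
    sq_abs] using bw_nonneg_general P Q
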